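/- Let S be a numerical semigroup minimally generated by n_1 < … < n_d, set m_i = n_d − n_i for 1 ≤ i ≤ d−1, g = gcd(m_1,…,m_{d−1}), let c be the conductor of T = ⟨m_1/g,…,m_{d−1}/g⟩ and L = m_1·m_2·((g·c + d·m_1)/m_{d−1} + d) − n_d. Then for every integer j > L, the shifted semigroup S+j = ⟨n_1+j,…,n_d+j⟩ is homogeneous (every element of AP(S+j, n_1+j) has all its factorizations with respect to n_1+j,…,n_d+j of the same length) and T(S+j) = ∅ (equivalently, the tangent cone of S+j is Cohen–Macaulay). -/

import Mathlib

open scoped BigOperators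

/-- The value `Σ aᵢ nᵢ` of a tuple of coefficients `a` w.r.t. the generators `n`. -/
def sval {d : ℕ} (n : Fin d → ℕ) (a : Fin d → ℕ) : ℕ := ∑ i, a i * n i

/-- The total length `Σ aᵢ` of a factorization. -/
def tlen {d : ℕ} (a : Fin d → ℕ) : ℕ := ∑ i, a i

/-- The submonoid of `ℕ` generated by `n`. -/
def gen {d : ℕ} (n : Fin d → ℕ) : Set ℕ := {s : ℕ | ∃ a : Fin d → ℕ, s = sval n a}

/-- The Apéry set of the semigroup generated by `n` with respect to `s`:
elements `x` of the semigroup such that `x - s` is not in the semigroup. -/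
def Apery {d : ℕ} (n : Fin d → ℕ) (s : ℕ) : Set ℕ :=
  {x : ℕ | x ∈ gen n ∧ ¬ ∃ y ∈ gen n, x = s + y}

/-- A subset `T` is homogeneous if every nonzero element of `T` has all its
factorizations of the same length. -/
def HomogSet {d : ℕ} (n : Fin d → ℕ) (T : Set ℕ) : Prop :=
  ∀ t ∈ T, t ≠ 0 → ∀ a b : Fin d → ℕ, sval n a = t → sval n b = t → tlen a = tlen b

/-- The order of `s`: the maximal length of a factorization of `s`. -/
noncomputable def ordS {d : ℕ} (n : Fin d → ℕ) (s : ℕ) : ℕ :=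
  sSup {l : ℕ | ∃ a : Fin d → ℕ, sval n a = s ∧ tlen a = l}

/-- The torsion set of the semigroup generated by `n`, with respect to the
generator of index `i0` (the smallest generator). -/
noncomputable def Torsion {d : ℕ} (n : Fin d → ℕ) (i0 : Fin d) : Set ℕ :=
  {s : ℕ | s ∈ gen n ∧ ∃ c : ℕ, 0 < c ∧ ordS n s + c < ordS n (s + c * n i0)}

/-- `n` is a minimal system of generators: any expression of a generator as a
nonnegative combination of the generators has total coefficient sum one. -/
def MinGen {d : ℕ} (n : Fin d → ℕ) : Prop :=
  ∀ r : Fin d, ∀ a : Fin d → ℕ, n r = sval n a → tlen a = 1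

/-- `n` generates a numerical semigroup (cofinite in `ℕ`). -/
def IsNumerical {d : ℕ} (n : Fin d → ℕ) : Prop := {x : ℕ | x ∉ gen n}.Finite

/-- The monomial `x^a = Π xᵢ^{aᵢ}`. -/
noncomputable def monom (k : Type*) [CommRing k] {d : ℕ} (a : Fin d → ℕ) :
    MvPolynomial (Fin d) k :=
  ∏ i, (MvPolynomial.X i : MvPolynomial (Fin d) k) ^ a i

/-- The toric ideal `I_S`: kernel of `k[x₁,…,x_d] → k[t]`, `xᵢ ↦ t^{nᵢ}`. -/
noncomputable def toricIdeal (k : Type*) [CommRing k] {d : ℕ} (n : Fin d → ℕ) :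
    Ideal (MvPolynomial (Fin d) k) :=
  RingHom.ker (MvPolynomial.aeval (R := k)
    (fun i => (Polynomial.X : Polynomial k) ^ n i)).toRingHom

/-- `E` is a minimal generating set of the ideal `I`: it spans `I` and no
proper subset spans `I`. -/
def IsMinGenSet {R : Type*} [CommRing R] (I : Ideal R) (E : Set R) : Prop :=
  Ideal.span E = I ∧ ∀ E' : Set R, E' ⊂ E → Ideal.span E' ≠ I

/-- Membership of an integer in the semigroup generated by `n`. -/
def memZ {d : ℕ} (n : Fin d → ℕ) (z : ℤ) : Prop := ∃ x ∈ gen n, (x : ℤ) = z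

/-- A numerical semigroup with Frobenius number `F = max (ℤ ∖ S)` is symmetric
if for every integer `z`, `z ∈ S ↔ F - z ∉ S`. -/
def IsSymmetric {d : ℕ} (n : Fin d → ℕ) : Prop :=
  ∃ F : ℤ, ¬ memZ n F ∧ (∀ z : ℤ, F < z → memZ n z) ∧
    ∀ z : ℤ, memZ n z ↔ ¬ memZ n (F - z)

/-- A numerical semigroup with Frobenius number `F = max (ℤ ∖ S)` is
pseudo-symmetric if `F` is even and for every integer `z`,
`z ∈ S ↔ (z ≠ F/2 ∧ F - z ∉ S)`. -/
def IsPseudoSymmetric {d : ℕ} (n : Fin d → ℕ) : Prop :=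
  ∃ F : ℤ, ¬ memZ n F ∧ (∀ z : ℤ, F < z → memZ n z) ∧ F % 2 = 0 ∧
    ∀ z : ℤ, memZ n z ↔ (z ≠ F / 2 ∧ ¬ memZ n (F - z))

/-- The generators `q·m₁,…,q·m_d, p·n₁,…,p·n_e` of the gluing of two numerical
semigroups. -/
def glueGen {d e : ℕ} (mg : Fin d → ℕ) (ng : Fin e → ℕ) (p q : ℕ) :
    Fin (d + e) → ℕ :=
  Fin.append (fun i => q * mg i) (fun i => p * ng i)


lemma sval_add' {d : ℕ} (n a b : Fin d → ℕ) : sval n (a + b) = sval n a + sval n b := by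
  simp [sval, add_mul, Finset.sum_add_distrib]

lemma tlen_add' {d : ℕ} (a b : Fin d → ℕ) : tlen (a + b) = tlen a + tlen b := by
  simp [tlen, Finset.sum_add_distrib]

lemma sval_single' {d : ℕ} (n : Fin d → ℕ) (i : Fin d) (q : ℕ) :
    sval n (Pi.single i q) = q * n i := by
  unfold sval
  rw [Finset.sum_eq_single i]
  · simp
  · intro b _ hb
    simp [Pi.single_eq_of_ne hb]
  · simp

lemma tlen_single' {d : ℕ} (i : Fin d) (q : ℕ) :
    tlen (Pi.single i q : Fin d → ℕ) = q := by
  unfold tlen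
  rw [Finset.sum_eq_single i]
  · simp
  · intro b _ hb
    simp [Pi.single_eq_of_ne hb]
  · simp

lemma rearr {d : ℕ} (m μ : Fin d → ℕ) (i0 l : Fin d) (hil : i0 ≠ l) (g c p w : ℕ)
    (hμ : ∀ i, m i = g * μ i) (hl : m l = 0) (hp : ∀ i, i ≠ i0 → m i ≤ p)
    (hw : ∀ i, i ≠ l → w ≤ m i) (hp0 : p < m i0) (hw0 : 0 < w) (hppos : 0 < p)
    (hc : ∀ x, c ≤ x → x ∈ gen μ) (a : Fin d → ℕ) (ha : a i0 = 0)
    (hM : m i0 * p * (g * c + m i0) ≤ sval m a * w) :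
    ∃ a' : Fin d → ℕ, 0 < a' i0 ∧ tlen a' = tlen a ∧ sval m a' = sval m a := by
  have hsv : ∀ b, sval m b = g * sval μ b := by
    intro b
    simp only [sval, Finset.mul_sum, hμ]
    exact Finset.sum_congr rfl fun i _ => by ring
  have hm0 : 0 < m i0 := by omega
  have hg0 : 0 < g := by
    rcases Nat.eq_zero_or_pos g with h | h
    · rw [hμ i0, h] at hm0; omega
    · exact h
  have hμ0 : 0 < μ i0 := by
    rcases Nat.eq_zero_or_pos (μ i0) with h | h
    · rw [hμ i0, h] at hm0; omega
    · exact h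
  have hwm : w ≤ m i0 := hw i0 hil
  have hMR : g * c + m i0 ≤ sval m a := by
    have h1 : w * (g * c + m i0) ≤ sval m a * w := by
      refine le_trans ?_ hM
      gcongr
      nlinarith
    rw [mul_comm] at h1
    exact Nat.le_of_mul_le_mul_right h1 hw0
  have hMR' : c + μ i0 ≤ sval μ a := by
    rw [hsv, hμ i0, ← mul_add] at hMR
    exact Nat.le_of_mul_le_mul_left hMR hg0
  set M' := sval μ a with hM'
  set q := (M' - c) / μ i0 with hq
  have hqpos : 0 < q := Nat.div_pos (by omega) hμ0
  have hq1 : q * μ i0 ≤ M' - c := Nat.div_mul_le_self _ _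
  have hq2 : M' - c < q * μ i0 + μ i0 := by
    have := Nat.lt_div_mul_add (a := M' - c) hμ0
    simpa [hq] using this
  obtain ⟨b, hb⟩ := hc (M' - q * μ i0) (by omega)
  set b0 := Function.update b l 0 with hb0
  have hb0m : sval m b0 = sval m b := by
    unfold sval
    refine Finset.sum_congr rfl fun i _ => ?_
    by_cases h : i = l
    · subst h; simp [hl]
    · simp [hb0, Function.update_of_ne h]
  have hA : sval m a ≤ tlen a * p := by
    unfold sval tlen
    rw [Finset.sum_mul]
    refine Finset.sum_le_sum fun i _ => ?_
    by_cases h : i = i0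
    · subst h; simp [ha]
    · exact Nat.mul_le_mul_left _ (hp i h)
  have hB : tlen b0 * w ≤ sval m b0 := by
    unfold sval tlen
    rw [Finset.sum_mul]
    refine Finset.sum_le_sum fun i _ => ?_
    by_cases h : i = l
    · subst h; simp [hb0]
    · exact Nat.mul_le_mul_left _ (hw i h)
  have hval : sval m b0 + q * m i0 = sval m a := by
    rw [hb0m, hsv b, hsv a, ← hb, hμ i0, ← hM']
    have : M' = (M' - q * μ i0) + q * μ i0 := by omega
    conv_rhs => rw [this]
    ring
  have hr : sval m b0 ≤ g * c + m i0 := by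
    rw [hb0m, hsv b, ← hb, hμ i0, ← mul_add]
    exact Nat.mul_le_mul_left _ (by omega)
  have hlen : q + tlen b0 ≤ tlen a := by
    have hq3 : q * m i0 ≤ sval m a := by omega
    have hB2 : tlen b0 * w ≤ g * c + m i0 := hB.trans hr
    have h1 : (q + tlen b0) * (m i0 * p * w) ≤ tlen a * (m i0 * p * w) := by
      calc (q + tlen b0) * (m i0 * p * w)
          = (q * m i0) * (p * w) + (m i0 * p) * (tlen b0 * w) := by ring
        _ ≤ sval m a * (p * w) + (m i0 * p) * (g * c + m i0) := by gcongr
        _ ≤ sval m a * (p * w) + sval m a * w := by gcongr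
        _ = sval m a * ((p + 1) * w) := by ring
        _ ≤ (tlen a * p) * (m i0 * w) := by
            gcongr
            omega
        _ = _ := by ring
    exact Nat.le_of_mul_le_mul_right h1 (by positivity)
  refine ⟨b0 + Pi.single i0 q + Pi.single l (tlen a - q - tlen b0), ?_, ?_, ?_⟩
  · simp; omega
  · rw [tlen_add', tlen_add', tlen_single', tlen_single']; omega
  · rw [sval_add', sval_add', sval_single', sval_single', hl]; omega

lemma sval_compl {d : ℕ} (v m : Fin d → ℕ) (N : ℕ) (h : ∀ i, v i + m i = N)
    (a : Fin d → ℕ) : sval v a + sval m a = N * tlen a := by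
  unfold sval tlen
  rw [← Finset.sum_add_distrib, Finset.mul_sum]
  exact Finset.sum_congr rfl fun i _ => by rw [← mul_add, h, mul_comm]

lemma tlen_le_sval {d : ℕ} (v : Fin d → ℕ) (hv : ∀ i, 0 < v i) (a : Fin d → ℕ) :
    tlen a ≤ sval v a :=
  Finset.sum_le_sum fun i _ => Nat.le_mul_of_pos_right _ (hv i)

lemma tlen_le_ord {d : ℕ} (v : Fin d → ℕ) (hv : ∀ i, 0 < v i) (a : Fin d → ℕ) :
    tlen a ≤ ordS v (sval v a) := by
  refine le_csSup ⟨sval v a, ?_⟩ ⟨a, rfl, rfl⟩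
  rintro l ⟨b, hb, rfl⟩
  rw [← hb]
  exact tlen_le_sval v hv b

lemma ord_attained {d : ℕ} (v : Fin d → ℕ) (hv : ∀ i, 0 < v i) (s : ℕ) (hs : s ∈ gen v) :
    ∃ a, sval v a = s ∧ tlen a = ordS v s := by
  obtain ⟨a, rfl⟩ := hs
  refine Nat.sSup_mem (s := {l : ℕ | ∃ b, sval v b = sval v a ∧ tlen b = l})
    ⟨_, a, rfl, rfl⟩ ⟨sval v a, ?_⟩
  rintro l ⟨b, hb, rfl⟩
  rw [← hb]
  exact tlen_le_sval v hv b

lemma sub_single {d : ℕ} (i : Fin d) (a : Fin d → ℕ) (h : 0 < a i) :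
    ∃ b : Fin d → ℕ, a = b + Pi.single i 1 := by
  refine ⟨Function.update a i (a i - 1), ?_⟩
  funext k
  by_cases hk : k = i
  · subst hk; simp; omega
  · simp [hk, Pi.single_eq_of_ne hk]

lemma conclude {d : ℕ} (v : Fin d → ℕ) (hv : ∀ i, 0 < v i) (i0 : Fin d)
    (key : ∀ a b : Fin d → ℕ, sval v a = sval v b → tlen b < tlen a →
      ∃ a' : Fin d → ℕ, 0 < a' i0 ∧ tlen a' = tlen a ∧ sval v a' = sval v a) :
    HomogSet v (Apery v (v i0)) ∧ Torsion v i0 = ∅ := by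
  constructor
  · intro t ht _ a b ha hb
    have aux : ∀ a b : Fin d → ℕ, sval v a = t → sval v b = t → ¬ tlen b < tlen a := by
      intro a b ha hb hlt
      obtain ⟨a', h1, _, h3⟩ := key a b (by rw [ha, hb]) hlt
      obtain ⟨e, rfl⟩ := sub_single i0 a' h1
      refine ht.2 ⟨sval v e, ⟨e, rfl⟩, ?_⟩
      rw [sval_add', sval_single', ha] at h3
      omega
    have := aux a b ha hb
    have := aux b a hb ha
    omega
  · rw [Set.eq_empty_iff_forall_notMem]
    rintro s ⟨hs, c, _, hlt⟩
    obtain ⟨b, hb, hbl⟩ := ord_attained v hv s hs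
    have main : ∀ c : ℕ, ∀ a : Fin d → ℕ, sval v a = s + c * v i0 →
        tlen a ≤ ordS v s + c := by
      intro c
      induction c with
      | zero =>
        intro a ha
        have := tlen_le_ord v hv a
        simpa [ha] using this
      | succ c ih =>
        intro a ha
        by_contra! hcon
        obtain ⟨a', h1, h2, h3⟩ := key a (b + Pi.single i0 (c + 1))
          (by rw [sval_add', sval_single', ha, hb])
          (by rw [tlen_add', tlen_single', hbl]; exact hcon)
        obtain ⟨e, rfl⟩ := sub_single i0 a' h1
        rw [sval_add', sval_single', ha] at h3
        rw [tlen_add', tlen_single'] at h2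
        have := ih e (by linarith)
        omega
    obtain ⟨a, ha, hal⟩ := ord_attained v hv (s + c * v i0)
      ⟨b + Pi.single i0 c, by rw [sval_add', sval_single', hb]⟩
    have := main c a ha
    omega

lemma cond_exists {d : ℕ} (μ : Fin d → ℕ) (s : Finset (Fin d)) (h : s.gcd μ = 1) :
    ∃ c, ∀ x, c ≤ x → x ∈ gen μ := by
  obtain ⟨c, hc⟩ := Nat.exists_mem_closure_of_ge (Set.range μ)
  have h1 : Nat.setGcd (Set.range μ) = 1 := by
    rw [← Nat.dvd_one, ← h]
    exact Finset.dvd_gcd fun i _ => Nat.setGcd_dvd_of_mem ⟨i, rfl⟩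
  refine ⟨c, fun x hx => ?_⟩
  obtain ⟨a, ha⟩ := AddSubmonoid.exists_of_mem_closure_range μ x
    (hc x hx (by rw [h1]; exact one_dvd x))
  exact ⟨a, by simpa [sval] using ha⟩

/-- for `j > L`, the shifted semigroup `S+j` is homogeneous
and `T(S+j) = ∅` (its tangent cone is Cohen–Macaulay). -/
theorem statement19
    {d : ℕ} (hd : 2 ≤ d) (n : Fin d → ℕ)
    (hmono : StrictMono n) (hpos : 0 < n ⟨0, by omega⟩)
    (hnum : IsNumerical n) (hmin : MinGen n)
    (g c : ℕ)
    (hg : g = (Finset.univ.filter (fun i : Fin d => (i : ℕ) < d - 1)).gcd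
      (fun i => n ⟨d - 1, by omega⟩ - n i))
    (hc : c = sInf {c' : ℕ | ∀ x : ℕ, c' ≤ x →
      x ∈ gen (fun i : Fin d => (n ⟨d - 1, by omega⟩ - n i) / g)})
    (L : ℚ)
    (hL : L = ((n ⟨d - 1, by omega⟩ - n ⟨0, by omega⟩ : ℕ) : ℚ) *
        ((n ⟨d - 1, by omega⟩ - n ⟨1, by omega⟩ : ℕ) : ℚ) *
        (((g : ℚ) * (c : ℚ) +
            (d : ℚ) * ((n ⟨d - 1, by omega⟩ - n ⟨0, by omega⟩ : ℕ) : ℚ)) /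
            ((n ⟨d - 1, by omega⟩ - n ⟨d - 2, by omega⟩ : ℕ) : ℚ) + (d : ℚ)) -
        ((n ⟨d - 1, by omega⟩ : ℕ) : ℚ))
    (j : ℕ) (hj : L < (j : ℚ))
    :
    HomogSet (fun i => n i + j)
        (Apery (fun i => n i + j) (n ⟨0, by omega⟩ + j)) ∧
    Torsion (fun i => n i + j) ⟨0, by omega⟩ = ∅ := by
  set i0 : Fin d := ⟨0, by omega⟩ with hi0
  set i1 : Fin d := ⟨1, by omega⟩ with hi1
  set l : Fin d := ⟨d - 1, by omega⟩ with hl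
  set l' : Fin d := ⟨d - 2, by omega⟩ with hl'
  have hlast : ∀ i, n i ≤ n l := fun i => hmono.monotone (by
    rw [Fin.le_def]; simp only [hl]; omega)
  have hne : i0 ≠ l := by
    intro h
    have := congrArg Fin.val h
    simp only [hi0, hl] at this
    omega
  have hm0 : 0 < n l - n i0 := by
    have : n i0 < n l := hmono (by rw [Fin.lt_def]; simp only [hi0, hl]; omega)
    omega
  have hw0 : 0 < n l - n l' := by
    have : n l' < n l := hmono (by rw [Fin.lt_def]; simp only [hl', hl]; omega)
    omega
  have hi0mem : i0 ∈ Finset.univ.filter (fun i : Fin d => (i : ℕ) < d - 1) := by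
    simp [hi0]; omega
  have hgdvd : ∀ i, n l - n i = g * ((n l - n i) / g) := by
    intro i
    refine (Nat.mul_div_cancel' ?_).symm
    by_cases h : (i : ℕ) < d - 1
    · rw [hg]
      exact Finset.gcd_dvd (f := fun i => n l - n i) (by simpa using h)
    · have : i = l := by
        apply Fin.ext
        have := i.2
        simp only [hl]; omega
      simp [this]
  have hcs : ∀ x, c ≤ x → x ∈ gen (fun i : Fin d => (n l - n i) / g) := by
    have hex := cond_exists (fun i : Fin d => (n l - n i) / g) _
      (by
        have := Finset.gcd_div_eq_one (f := fun i => n l - n i) hi0mem hm0.ne'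
        rw [← hg] at this
        exact this)
    have := Nat.sInf_mem (s := {c' : ℕ | ∀ x : ℕ, c' ≤ x →
      x ∈ gen (fun i : Fin d => (n l - n i) / g)}) hex
    rw [← hc] at this
    exact this
  have hvpos : ∀ i, 0 < n i + j := by
    intro i
    have : n i0 ≤ n i := hmono.monotone (by rw [Fin.le_def]; simp [hi0])
    omega
  refine conclude (fun i => n i + j) hvpos i0 ?_
  intro a b hab hlt
  by_cases ha0 : 0 < a i0
  · exact ⟨a, ha0, rfl, rfl⟩
  have ha0' : a i0 = 0 := by omega
  have hcompl := sval_compl (fun i => n i + j) (fun i => n l - n i) (n l + j)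
    (fun i => by have := hlast i; omega)
  have hMN : n l + j ≤ sval (fun i => n l - n i) a := by
    have h1 := hcompl a
    have h2 := hcompl b
    have h3 : (n l + j) * (tlen b + 1) ≤ (n l + j) * tlen a := Nat.mul_le_mul_left _ hlt
    rw [mul_add] at h3
    omega
  have hp : ∀ i, i ≠ i0 → n l - n i ≤ n l - n i1 := by
    intro i hi
    have : n i1 ≤ n i := hmono.monotone (by
      rw [Fin.le_def]; simp only [hi1]
      rcases Nat.eq_zero_or_pos (i : ℕ) with h | h
      · exact absurd (Fin.ext (by simpa [hi0] using h)) hi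
      · omega)
    omega
  have hw : ∀ i, i ≠ l → n l - n l' ≤ n l - n i := by
    intro i hi
    have : n i ≤ n l' := hmono.monotone (by
      rw [Fin.le_def]; simp only [hl']
      have h2 := i.2
      have : (i : ℕ) ≠ d - 1 := fun h => hi (Fin.ext h)
      omega)
    omega
  have hp0 : n l - n i1 < n l - n i0 := by
    have : n i0 < n i1 := hmono (by rw [Fin.lt_def]; simp [hi0, hi1])
    have := hlast i1
    omega
  have hppos : 0 < n l - n i1 := by
    by_contra hz
    have hz' : n l - n i1 = 0 := by omega
    have : sval (fun i => n l - n i) a = 0 := by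
      unfold sval
      refine Finset.sum_eq_zero fun i _ => ?_
      by_cases h : i = i0
      · rw [h, ha0']; simp
      · have := hp i h
        have : n l - n i = 0 := by omega
        simp only [this, mul_zero]
    have := hvpos l
    omega
  have hM : (n l - n i0) * (n l - n i1) * (g * c + (n l - n i0)) ≤
      sval (fun i => n l - n i) a * (n l - n l') := by
    refine le_trans ?_ (Nat.mul_le_mul_right _ hMN)
    generalize n l - n i0 = m1 at *
    generalize n l - n i1 = p at *
    generalize n l - n l' = w at *
    have hwq : (0 : ℚ) < w := by exact_mod_cast hw0
    have hdq : (1 : ℚ) ≤ d := by exact_mod_cast (by omega : 1 ≤ d)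
    rw [hL] at hj
    have h1 : (m1 : ℚ) * p * (((g : ℚ) * c + d * m1) / w + d) ≤ n l + j := by linarith
    have h2 : (m1 : ℚ) * p * (((g : ℚ) * c + m1) / w) ≤ n l + j := by
      refine le_trans ?_ h1
      refine mul_le_mul_of_nonneg_left ?_ (by positivity)
      have : ((g : ℚ) * c + m1) / w ≤ ((g : ℚ) * c + d * m1) / w := by
        gcongr
        nlinarith [(Nat.cast_nonneg m1 : (0 : ℚ) ≤ m1)]
      linarith
    rw [← mul_div_assoc, div_le_iff₀ hwq] at h2
    exact_mod_cast h2
  obtain ⟨a', h1, h2, h3⟩ := rearr (fun i => n l - n i) (fun i => (n l - n i) / g) i0 l hne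
    g c (n l - n i1) (n l - n l') hgdvd (by simp) hp hw hp0 hw0 hppos hcs a ha0' hM
  refine ⟨a', h1, h2, ?_⟩
  have e1 := hcompl a
  have e2 := hcompl a'
  rw [h2] at e2
  omega
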